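/- Let ℓ be a prime, k ≥ 1 an integer, let M = (ℤ/ℓ^{k+1}ℤ)² be the free module of rank 2 over ℤ/ℓ^{k+1}ℤ, and let G be a subgroup of GL₂(ℤ/ℓ^{k+1}ℤ) acting naturally on M. If the fixed-point subgroup M^G = {m ∈ M : g·m = m for all g ∈ G} has a cyclic direct summand of order ℓ^k, then there exists g ∈ G such that the fixed-point subgroup M^{⟨g⟩} = {m ∈ M : g·m = m} has a cyclic direct summand of order ℓ^k. -/

import Mathlib

/-- An abelian group `A` has a cyclic direct summand of order `n` if there are an element
`x ∈ A` of order `n` and a subgroup `H ≤ A` such that `A` is the internal direct sum of the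
cyclic subgroup generated by `x` and `H`. -/
def HasCyclicSummand (A : Type*) [AddCommGroup A] (n : ℕ) : Prop :=
  ∃ x : A, addOrderOf x = n ∧ ∃ H : AddSubgroup A, IsCompl (AddSubgroup.zmultiples x) H

/-- The additive subgroup of vectors in `R²` fixed by every element of a set `S` of invertible
`2×2` matrices over `R`, acting by matrix-vector multiplication. -/
def fixedVectors {R : Type*} [CommRing R] (S : Set (GL (Fin 2) R)) :
    AddSubgroup (Fin 2 → R) where
  carrier := {m | ∀ g ∈ S, Matrix.mulVec (g : Matrix (Fin 2) (Fin 2) R) m = m}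
  zero_mem' := fun g _ => Matrix.mulVec_zero _
  add_mem' {a b} ha hb := fun g hg => by
    rw [Matrix.mulVec_add, ha g hg, hb g hg]
  neg_mem' {a} ha := fun g hg => by
    rw [Matrix.mulVec_neg, ha g hg]

open Matrix

/-- In an abelian group of exponent dividing `n`, an element of order `n` generates a direct
summand. -/
lemma HasCyclicSummand.of_nsmul_eq_zero {A : Type*} [AddCommGroup A] {n : ℕ} (hn : 0 < n)
    {x : A} (hx : addOrderOf x = n) (hA : ∀ a : A, n • a = 0) : HasCyclicSummand A n := by
  obtain ⟨f, hf⟩ : ∃ f : A →+ AddCircle (1 : ℚ), addOrderOf (f x) = n := by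
    let c : ZMod n →+ AddCircle (1 : ℚ) := ZMod.lift n
      ⟨zmultiplesHom _ (((1 : ℚ) / n : ℚ) : AddCircle (1 : ℚ)), by
        have := addOrderOf_nsmul_eq_zero (((1 : ℚ) / n : ℚ) : AddCircle (1 : ℚ))
        rw [AddCircle.addOrderOf_period_div hn] at this
        simpa using this⟩
    let i : ZMod n →+ A := ZMod.lift n ⟨zmultiplesHom _ x, by simpa using hA x⟩
    have hi : Function.Injective i := by
      rw [injective_iff_map_eq_zero]
      intro a ha
      obtain ⟨a, rfl⟩ := ZMod.intCast_surjective a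
      rw [ZMod.intCast_zmod_eq_zero_iff_dvd, ← hx, addOrderOf_dvd_iff_zsmul_eq_zero]
      simpa [i] using ha
    obtain ⟨f, hf⟩ := CharacterModule.dual_surjective_of_injective i.toIntLinearMap hi c
    refine ⟨f, ?_⟩
    have h1 : f (i (1 : ℤ)) = c (1 : ℤ) := DFunLike.congr_fun hf ((1 : ℤ) : ZMod n)
    have h2 : i (1 : ℤ) = x := by simp only [i, ZMod.lift_coe]; simp
    have h3 : c (1 : ℤ) = (((1 : ℚ) / n : ℚ) : AddCircle (1 : ℚ)) := by
      simp only [c, ZMod.lift_coe]; simp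
    rw [h2, h3] at h1
    exact (congrArg addOrderOf h1).trans (AddCircle.addOrderOf_period_div hn)
  refine ⟨x, hx, f.ker, ?_⟩
  rw [isCompl_iff, disjoint_iff, codisjoint_iff, eq_bot_iff, eq_top_iff]
  constructor
  · rintro _ ⟨⟨j, rfl⟩, hj⟩
    have hj : f (j • x) = 0 := hj
    rw [map_zsmul, ← addOrderOf_dvd_iff_zsmul_eq_zero, hf, ← hx,
      addOrderOf_dvd_iff_zsmul_eq_zero] at hj
    simpa using hj
  · intro a _
    have hfa : n • f a = 0 := by rw [← map_nsmul, hA, map_zero]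
    have hmem : f a ∈ AddSubgroup.zmultiples (f x) := by
      have key : ∀ u : AddCircle (1 : ℚ), n • u = 0 →
          ∃ m : ℕ, u = m • (((1 : ℚ) / n : ℚ) : AddCircle (1 : ℚ)) := by
        intro u hu
        obtain ⟨m, -, rfl⟩ := (AddCircle.nsmul_eq_zero_iff hn).mp hu
        exact ⟨m, by rw [← AddCircle.coe_nsmul]; congr 1; simp [div_eq_mul_inv]⟩
      obtain ⟨m, hm, hmn, hfx⟩ := (AddCircle.addOrderOf_eq_pos_iff hn).mp hf
      obtain ⟨b, hb⟩ := key (f a) hfa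
      have hmx : f x = m • (((1 : ℚ) / n : ℚ) : AddCircle (1 : ℚ)) := by
        rw [← hfx, ← AddCircle.coe_nsmul]; congr 1; simp [div_eq_mul_inv]
      set t := (((1 : ℚ) / n : ℚ) : AddCircle (1 : ℚ))
      have ht : n • t = 0 := by
        have := addOrderOf_nsmul_eq_zero t
        rwa [AddCircle.addOrderOf_period_div hn] at this
      have hbez := Nat.gcd_eq_gcd_ab m n
      rw [hmn] at hbez
      refine AddSubgroup.mem_zmultiples_iff.mpr ⟨b * Nat.gcdA m n, ?_⟩
      have ht1 : (m * Nat.gcdA m n : ℤ) • t = t := by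
        have : (m * Nat.gcdA m n : ℤ) = 1 - Nat.gcdB m n * n := by
          push_cast at hbez; linarith
        rw [this, sub_smul, mul_smul, natCast_zsmul, ht, smul_zero, one_smul, sub_zero]
      rw [hb, hmx, ← natCast_zsmul, ← mul_smul, mul_assoc, mul_smul, mul_comm (Nat.gcdA m n), ht1,
        natCast_zsmul]
    obtain ⟨j, hj⟩ := AddSubgroup.mem_zmultiples_iff.mp hmem
    refine AddSubgroup.mem_sup.mpr ⟨j • x, ⟨j, rfl⟩, a - j • x, ?_, by abel⟩
    rw [AddMonoidHom.mem_ker, map_sub, map_zsmul, hj, sub_self]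

/-- A non-unit of `ℤ/ℓ^n` is divisible by `ℓ`. -/
lemma ZMod.natCast_dvd_of_not_isUnit {ℓ n : ℕ} (hℓ : ℓ.Prime) {a : ZMod (ℓ ^ n)}
    (ha : ¬ IsUnit a) : (ℓ : ZMod (ℓ ^ n)) ∣ a := by
  have : NeZero (ℓ ^ n) := ⟨pow_ne_zero _ hℓ.ne_zero⟩
  rw [← ZMod.natCast_zmod_val a] at ha ⊢
  rw [ZMod.isUnit_iff_coprime] at ha
  refine Nat.cast_dvd_cast (by_contra fun h => ha ?_)
  exact ((hℓ.coprime_iff_not_dvd.mpr h).pow_left n).symm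

lemma mem_fixedVectors_singleton {R : Type*} [CommRing R] {g : GL (Fin 2) R} {m : Fin 2 → R} :
    m ∈ fixedVectors {g} ↔ ((g : Matrix (Fin 2) (Fin 2) R) - 1) *ᵥ m = 0 := by
  rw [Matrix.sub_mulVec, Matrix.one_mulVec, sub_eq_zero]
  exact ⟨fun h => h g rfl, fun h g' hg' => by rw [Set.mem_singleton_iff.mp hg']; exact h⟩

/-- A nontrivial matrix that is trivial on `ℓM` and fixes a unimodular vector has a summand of
order `ℓ^k` in its fixed vectors. -/
lemma hasCyclicSummand_of_nsmul_sub_one_eq_zero {ℓ k : ℕ} (hℓ : ℓ.Prime)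
    {g : GL (Fin 2) (ZMod (ℓ ^ (k + 1)))} (hg : g ≠ 1)
    (hN : (ℓ : ZMod (ℓ ^ (k + 1))) •
      ((g : Matrix (Fin 2) (Fin 2) (ZMod (ℓ ^ (k + 1)))) - 1) = 0)
    {w : Fin 2 → ZMod (ℓ ^ (k + 1))} (hw : w ∈ fixedVectors {g}) {i : Fin 2}
    (hi : IsUnit (w i)) : HasCyclicSummand (fixedVectors {g}) (ℓ ^ k) := by
  have : NeZero (ℓ ^ (k + 1)) := ⟨pow_ne_zero _ hℓ.ne_zero⟩
  obtain ⟨u, hu⟩ : ∃ u : Fin 2 → ZMod (ℓ ^ (k + 1)), u 0 * w 0 + u 1 * w 1 = 1 := by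
    obtain ⟨c, hc⟩ := hi.exists_left_inv
    refine ⟨Pi.single i c, ?_⟩
    fin_cases i <;> simpa using hc
  set N := (g : Matrix (Fin 2) (Fin 2) (ZMod (ℓ ^ (k + 1)))) - 1 with hNdef
  have hNw : N *ᵥ w = 0 := mem_fixedVectors_singleton.mp hw
  have hN0 : N ≠ 0 := fun h => hg (Units.ext (sub_eq_zero.mp h))
  let e : Fin 2 → ZMod (ℓ ^ (k + 1)) := ![-u 1, u 0]
  have hdecomp (m : Fin 2 → ZMod (ℓ ^ (k + 1))) :
      m = (u 0 * m 0 + u 1 * m 1) • w + (w 0 * m 1 - w 1 * m 0) • e := by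
    ext j
    fin_cases j
    · simp [e]; linear_combination (-m 0) * hu
    · simp [e]; linear_combination (-m 1) * hu
  have hNm (m : Fin 2 → ZMod (ℓ ^ (k + 1))) :
      N *ᵥ m = (w 0 * m 1 - w 1 * m 0) • N *ᵥ e := by
    conv_lhs => rw [hdecomp m, mulVec_add, mulVec_smul, mulVec_smul, hNw, smul_zero, zero_add]
  have hNe : N *ᵥ e ≠ 0 := fun h => hN0 <| by
    refine Matrix.ext_iff_mulVec.mpr fun m => ?_
    rw [hNm, h, smul_zero, zero_mulVec]
  have hx : (ℓ : ZMod (ℓ ^ (k + 1))) • e ∈ fixedVectors {g} := by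
    rw [mem_fixedVectors_singleton, mulVec_smul, ← smul_mulVec, hN, zero_mulVec]
  have hdet (j : ℤ) (a : ZMod (ℓ ^ (k + 1)))
      (h : j • (ℓ : ZMod (ℓ ^ (k + 1))) • e = a • w) : (j * ℓ : ZMod (ℓ ^ (k + 1))) = 0 := by
    have h0 := congrFun h 0
    have h1 := congrFun h 1
    simp [e] at h0 h1
    linear_combination w 0 * h1 - w 1 * h0 - (j * ℓ : ZMod (ℓ ^ (k + 1))) * hu
  refine ⟨⟨_, hx⟩, ?_, AddSubgroup.zmultiples ⟨w, hw⟩, ?_⟩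
  · refine Nat.dvd_right_iff_eq.mp fun j => ?_
    rw [addOrderOf_dvd_iff_nsmul_eq_zero]
    have key : ((j : ZMod (ℓ ^ (k + 1))) * ℓ = 0) ↔ ℓ ^ k ∣ j := by
      rw [← Nat.cast_mul, ZMod.natCast_eq_zero_iff, pow_succ, Nat.mul_dvd_mul_iff_right hℓ.pos]
    rw [← key, ← Subtype.coe_inj]
    simp only [AddSubgroup.coe_nsmul, AddSubgroup.coe_zero]
    constructor
    · intro h
      simpa using hdet j 0 (by simpa using h)
    · intro h
      rw [← Nat.cast_smul_eq_nsmul (ZMod (ℓ ^ (k + 1))), smul_smul, h, zero_smul]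
  · rw [isCompl_iff, disjoint_iff, codisjoint_iff, eq_bot_iff, eq_top_iff]
    constructor
    · rintro _ ⟨⟨j, rfl⟩, ⟨a, ha⟩⟩
      have ha' : j • (ℓ : ZMod (ℓ ^ (k + 1))) • e = (a : ZMod (ℓ ^ (k + 1))) • w := by
        rw [Int.cast_smul_eq_zsmul]
        exact (congrArg Subtype.val ha).symm
      rw [AddSubgroup.mem_bot, ← Subtype.coe_inj]
      change j • (ℓ : ZMod (ℓ ^ (k + 1))) • e = 0
      rw [← Int.cast_smul_eq_zsmul (ZMod (ℓ ^ (k + 1))), smul_smul, hdet j a ha', zero_smul]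
    · rintro ⟨m, hm⟩ _
      have hm0 := mem_fixedVectors_singleton.mp hm
      rw [hNm] at hm0
      obtain ⟨y, hy⟩ := ZMod.natCast_dvd_of_not_isUnit hℓ
        (a := w 0 * m 1 - w 1 * m 0) fun h => hNe (h.smul_eq_zero.mp hm0)
      refine AddSubgroup.mem_sup.mpr ⟨_, ⟨(y.val : ℤ), rfl⟩, _,
        ⟨((u 0 * m 0 + u 1 * m 1).val : ℤ), rfl⟩, ?_⟩
      rw [← Subtype.coe_inj]
      change (y.val : ℤ) • (ℓ : ZMod (ℓ ^ (k + 1))) • e +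
        ((u 0 * m 0 + u 1 * m 1).val : ℤ) • w = m
      conv_rhs => rw [hdecomp m, hy]
      simp only [← Int.cast_smul_eq_zsmul (ZMod (ℓ ^ (k + 1))), Int.cast_natCast,
        ZMod.natCast_zmod_val, smul_smul]
      module

/-- If the vectors fixed by `g` contain an element of order `ℓ^k` but have no cyclic summand of
that order, then `g` fixes a unimodular vector. -/
lemma exists_isUnit_of_not_hasCyclicSummand {ℓ k : ℕ} (hℓ : ℓ.Prime)
    {g : GL (Fin 2) (ZMod (ℓ ^ (k + 1)))} {x : Fin 2 → ZMod (ℓ ^ (k + 1))}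
    (hx : x ∈ fixedVectors {g}) (hord : addOrderOf x = ℓ ^ k)
    (hbad : ¬ HasCyclicSummand (fixedVectors {g}) (ℓ ^ k)) :
    ∃ w ∈ fixedVectors {g}, ∃ i, IsUnit (w i) := by
  by_contra! hcon
  refine hbad (HasCyclicSummand.of_nsmul_eq_zero (pow_pos hℓ.pos k) (x := ⟨x, hx⟩) ?_ ?_)
  · rw [← hord, ← AddSubgroup.addOrderOf_coe]
  · rintro ⟨m, hm⟩
    rw [← Subtype.coe_inj]
    ext i
    obtain ⟨y, hy⟩ := ZMod.natCast_dvd_of_not_isUnit hℓ (hcon m hm i)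
    simp only [AddSubgroup.coe_nsmul, AddSubgroup.coe_zero, Pi.smul_apply, Pi.zero_apply, hy]
    rw [nsmul_eq_mul, ← mul_assoc, ← Nat.cast_mul, ← pow_succ, ZMod.natCast_self, zero_mul]

lemma det_eq_zero_of_mulVec_eq_zero_of_isUnit {R : Type*} [CommRing R]
    {N : Matrix (Fin 2) (Fin 2) R} {w : Fin 2 → R} (h : N *ᵥ w = 0) {i : Fin 2}
    (hi : IsUnit (w i)) : N.det = 0 := by
  have h1 : N.det • w = 0 := by
    rw [← one_mulVec w, ← smul_mulVec, ← adjugate_mul, ← mulVec_mulVec, h, mulVec_zero]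
  exact hi.mul_left_eq_zero.mp (congrFun h1 i)

/-- Powers of `1 + N` for a `2 × 2` matrix `N` of determinant zero. -/
lemma one_add_pow_of_det_eq_zero {R : Type*} [CommRing R] {N : Matrix (Fin 2) (Fin 2) R}
    (h : N.det = 0) (n : ℕ) :
    (1 + N) ^ n = 1 + (∑ i ∈ Finset.range n, (1 + N).det ^ i) • N := by
  have hdet : (1 + N).det = 1 + N.trace := by
    rw [det_fin_two] at h ⊢
    simp [trace_fin_two]
    linear_combination h
  have hsq : N * N = N.trace • N := by
    rw [det_fin_two] at h
    ext i j
    fin_cases i <;> fin_cases j <;> simp [mul_apply, trace_fin_two] <;>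
      first | linear_combination -h | ring1
  rw [hdet]
  induction n with
  | zero => simp
  | succ n ih =>
    rw [pow_succ, ih, geom_sum_succ, add_mul, one_mul, mul_add, mul_one, smul_mul_assoc, hsq]
    module

lemma geom_sum_eq_mul_one_add {R : Type*} [CommRing R] {ℓ : ℕ} {c z : R}
    (h : c * ∑ i ∈ Finset.range ℓ, (i : R) = ℓ * z) :
    ∃ y : R, ∑ i ∈ Finset.range ℓ, (1 + ℓ * c) ^ i = ℓ * (1 + ℓ * y) := by
  have hpow (i : ℕ) : ∃ y : R, (1 + ℓ * c) ^ i = 1 + ℓ * (c * i) + ℓ ^ 2 * y := by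
    induction i with
    | zero => exact ⟨0, by simp⟩
    | succ i ih =>
      obtain ⟨y, hy⟩ := ih
      exact ⟨y * (1 + ℓ * c) + c * c * i, by rw [pow_succ, hy]; push_cast; ring⟩
  choose y hy using hpow
  refine ⟨z + ∑ i ∈ Finset.range ℓ, y i, ?_⟩
  simp only [hy, Finset.sum_add_distrib, ← Finset.mul_sum, h]
  simp
  ring

lemma exists_isCyclic_units_and_geom_sum {ℓ : ℕ} (hℓ : ℓ.Prime) {k : ℕ} (hk : 1 ≤ k) :
    ∃ q, q ∣ ℓ ^ (k + 1) ∧ IsCyclic (ZMod q)ˣ ∧ ∀ d : ZMod (ℓ ^ (k + 1)),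
      (q : ZMod (ℓ ^ (k + 1))) ∣ d - 1 → ∃ u : ZMod (ℓ ^ (k + 1)), IsUnit u ∧
        ∑ i ∈ Finset.range ℓ, d ^ i = ℓ * u := by
  have hunit (y : ZMod (ℓ ^ (k + 1))) : IsUnit (1 + ℓ * y) := by
    refine IsNilpotent.isUnit_one_add ⟨k + 1, ?_⟩
    rw [mul_pow, ← Nat.cast_pow, ZMod.natCast_self, zero_mul]
  rcases hℓ.eq_two_or_odd' with rfl | hodd
  · refine ⟨4, pow_dvd_pow 2 (show 2 ≤ k + 1 by omega),
      ZMod.isCyclic_units_four, ?_⟩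
    rintro d ⟨c, hc⟩
    obtain ⟨y, hy⟩ := geom_sum_eq_mul_one_add (ℓ := 2) (c := 2 * c) (z := c)
      (by simp [Finset.sum_range_succ])
    refine ⟨_, hunit y, ?_⟩
    rw [← hy, show d = 1 + (2 : ℕ) * (2 * c) by push_cast at hc ⊢; linear_combination hc]
  · refine ⟨ℓ, dvd_pow_self _ (by omega), ZMod.isCyclic_units_prime hℓ, ?_⟩
    rintro d ⟨c, hc⟩
    obtain ⟨m, hm⟩ := hodd
    obtain ⟨y, hy⟩ := geom_sum_eq_mul_one_add (ℓ := ℓ) (c := c) (z := c * m) (by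
      rw [← Nat.cast_sum, Finset.sum_range_id, Nat.mul_div_assoc _ (by omega),
        show (ℓ - 1) / 2 = m by omega]
      push_cast
      ring)
    refine ⟨_, hunit y, ?_⟩
    rw [← hy, show d = 1 + ℓ * c by linear_combination hc]

/-- Let `ℓ` be a prime, `k ≥ 1`, `M = (ℤ/ℓ^{k+1}ℤ)²`, and
`G ≤ GL₂(ℤ/ℓ^{k+1}ℤ)` acting naturally on `M`. If the fixed-point subgroup `M^G` has a cyclic
direct summand of order `ℓ^k`, then there is `g ∈ G` such that `M^{⟨g⟩}` has a cyclic direct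
summand of order `ℓ^k`. -/
theorem statement19 (ℓ : ℕ) (hℓ : ℓ.Prime) (k : ℕ) (hk : 1 ≤ k)
    (G : Subgroup (GL (Fin 2) (ZMod (ℓ ^ (k + 1)))))
    (h : HasCyclicSummand (fixedVectors (G : Set (GL (Fin 2) (ZMod (ℓ ^ (k + 1)))))) (ℓ ^ k)) :
    ∃ g ∈ G, HasCyclicSummand (fixedVectors {g}) (ℓ ^ k) := by
  by_contra! hbad
  have hfix : ∀ g ∈ G, ∃ w ∈ fixedVectors {g}, ∃ i, IsUnit (w i) := fun g hg => by
    obtain ⟨⟨x, hx⟩, hord, -⟩ := h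
    refine exists_isUnit_of_not_hasCyclicSummand hℓ (x := x) ?_ ?_ (hbad g hg)
    · exact fun g' hg' => hx g' (by rw [Set.mem_singleton_iff.mp hg']; exact hg)
    · rw [← hord, ← AddSubgroup.addOrderOf_coe]
  obtain ⟨q, hq, hcyc, hgeom⟩ := exists_isCyclic_units_and_geom_sum hℓ hk
  let δ : G →* (ZMod q)ˣ :=
    ((ZMod.unitsMap hq).comp Matrix.GeneralLinearGroup.det).comp G.subtype
  have hker (p : ℕ) : ∀ g : G, δ g = 1 → (ℓ : ZMod (ℓ ^ (k + 1))) ^ p •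
      (((g : GL (Fin 2) (ZMod (ℓ ^ (k + 1)))) :
        Matrix (Fin 2) (Fin 2) (ZMod (ℓ ^ (k + 1)))) - 1) = 0 → g = 1 := by
    induction p with
    | zero =>
      intro g _ hg
      rw [pow_zero, one_smul, sub_eq_zero] at hg
      exact Subtype.ext (Units.ext hg)
    | succ p ih =>
      rintro ⟨g, hgG⟩ hδ hg
      obtain ⟨w, hw, i, hi⟩ := hfix g hgG
      set N := (g : Matrix (Fin 2) (Fin 2) (ZMod (ℓ ^ (k + 1)))) - 1 with hN
      have hg1 : (g : Matrix (Fin 2) (Fin 2) (ZMod (ℓ ^ (k + 1)))) = 1 + N := by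
        rw [hN]; abel
      have hdet := det_eq_zero_of_mulVec_eq_zero_of_isUnit
        (mem_fixedVectors_singleton.mp hw) hi
      obtain ⟨u, hu, hsum⟩ := hgeom (1 + N).det (by
        have h0 : ZMod.castHom hq (ZMod q) ((1 + N).det - 1) = 0 := by
          rw [map_sub, map_one, sub_eq_zero, ← hg1]
          exact congrArg Units.val hδ
        have : NeZero (ℓ ^ (k + 1)) := ⟨pow_ne_zero _ hℓ.ne_zero⟩
        rw [← ZMod.natCast_zmod_val ((1 + N).det - 1)] at h0 ⊢
        rw [map_natCast, ZMod.natCast_eq_zero_iff] at h0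
        exact Nat.cast_dvd_cast h0)
      have hpow := one_add_pow_of_det_eq_zero hdet ℓ
      rw [← hN, hsum, ← hg1] at hpow
      have hgl : (⟨g, hgG⟩ : G) ^ ℓ = 1 := by
        refine ih _ (by rw [map_pow, hδ, one_pow]) ?_
        rw [Subgroup.coe_pow, Units.val_pow_eq_pow_val, hpow, add_sub_cancel_left, smul_smul,
          ← mul_assoc, ← pow_succ, mul_comm, mul_smul, hg, smul_zero]
      have hgl' : (g : Matrix (Fin 2) (Fin 2) (ZMod (ℓ ^ (k + 1)))) ^ ℓ = 1 :=
        congrArg (fun a : G => ((a : GL (Fin 2) (ZMod (ℓ ^ (k + 1)))) :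
          Matrix (Fin 2) (Fin 2) (ZMod (ℓ ^ (k + 1))))) hgl
      rw [hpow, add_eq_left, mul_comm, mul_smul, hu.smul_eq_zero] at hgl'
      by_contra hne
      exact hbad g hgG (hasCyclicSummand_of_nsmul_sub_one_eq_zero hℓ
        (fun h1 => hne (Subtype.ext h1)) hgl' hw hi)
  have hinj : Function.Injective δ := by
    rw [injective_iff_map_eq_one]
    refine fun g hg => hker (k + 1) g hg ?_
    rw [← Nat.cast_pow, ZMod.natCast_self, zero_smul]
  have := isCyclic_of_injective δ hinj
  obtain ⟨⟨g, hgG⟩, hgen⟩ := IsCyclic.exists_generator (α := G)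
  refine hbad g hgG ?_
  have hle : G = Subgroup.zpowers g := by
    refine le_antisymm (fun a ha => ?_) (by simpa using hgG)
    obtain ⟨n, hn⟩ := hgen ⟨a, ha⟩
    exact ⟨n, congrArg Subtype.val hn⟩
  have hstab (m : Fin 2 → ZMod (ℓ ^ (k + 1))) (hm : m ∈ fixedVectors {g}) :
      m ∈ fixedVectors (G : Set (GL (Fin 2) (ZMod (ℓ ^ (k + 1))))) := by
    let S : Subgroup (GL (Fin 2) (ZMod (ℓ ^ (k + 1)))) :=
      { carrier := {a | (a : Matrix (Fin 2) (Fin 2) (ZMod (ℓ ^ (k + 1)))) *ᵥ m = m}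
        one_mem' := one_mulVec m
        mul_mem' := fun {a b} (ha : _ = _) (hb : _ = _) => by
          change (a * b : GL (Fin 2) (ZMod (ℓ ^ (k + 1)))).val *ᵥ m = m
          rw [Units.val_mul, ← mulVec_mulVec, hb, ha]
        inv_mem' := fun {a} (ha : _ = _) => by
          change (a⁻¹ : GL (Fin 2) (ZMod (ℓ ^ (k + 1)))).val *ᵥ m = m
          conv_lhs => rw [← ha, mulVec_mulVec, ← Units.val_mul, inv_mul_cancel, Units.val_one,
            one_mulVec] }
    have hS : G ≤ S := by
      rw [hle, Subgroup.zpowers_le]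
      exact hm g rfl
    exact fun a ha => hS ha
  have heq : fixedVectors {g} = fixedVectors (G : Set (GL (Fin 2) (ZMod (ℓ ^ (k + 1))))) :=
    le_antisymm hstab fun m hm g' hg' => hm g' (by rw [Set.mem_singleton_iff.mp hg']; exact hgG)
  rwa [heq]
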